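/- arXiv:2601.02079 — 2 statements merged into one kernel-verified Lean document; each statement's English description precedes it below -/
import Mathlib

section
/- Let V₁, W₁ ∈ (0,1) and Q₁ = V₁(1+W₁)/(2W₁). Then sup_{x∈ℝ} H(x, 0) = (1/(1−W₁))·(1−V₁²)/(1−Q₁V₁) if Q₁ ≤ 1, and sup_{x∈ℝ} H(x, 0) = (1/(1+W₁))·(1+V₁)/(1−V₁) if Q₁ ≥ 1; the supremum is attained at a point x₀ with cos x₀ = −Q₁ when Q₁ ≤ 1, and at x₀ an odd multiple of π when Q₁ ≥ 1. Moreover inf_{x∈ℝ} H(x, 0) = 1/(1−W₁), attained at every multiple of π if V₁ ≤ W₁, and at every even multiple of π if V₁ > W₁. -/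
/-- For parameters `V, W ∈ [0,1)`, the function
`f_{VW}(α, x) = (1 + V·cos(x + α))/(1 − W·cos α)`. -/
noncomputable def fVW (V W α x : ℝ) : ℝ :=
    (1 + V * Real.cos (x + α)) / (1 - W * Real.cos α)

/-- `f^max_{VW}(x) = sup_{α ∈ ℝ} f_{VW}(α, x)`. -/
noncomputable def fVWmax (V W x : ℝ) : ℝ := ⨆ α : ℝ, fVW V W α x

/-- `H(x, β) = f^max_{V₁W₁}(x)/(1 + V₁·cos(x + β))`. -/
noncomputable def Hfun (V₁ W₁ x β : ℝ) : ℝ :=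
    fVWmax V₁ W₁ x / (1 + V₁ * Real.cos (x + β))

/-!
Clearing denominators, `f_{VW}(α, x) ≤ M` says that
`(V cos x + W M) cos α - V sin x sin α ≤ M - 1`. The left side sweeps out the interval of radius
`√((V cos x + W M)² + (V sin x)²)` as `α` varies, so `M` bounds `f_{VW}(·, x)` from one side as
soon as this radius is at most `|M - 1|`, and `M` is a value of `f_{VW}(·, x)` when they are equal.

For `M = K u` with `u = 1 + V cos x`, the gap `(M - 1)² - (V cos x + W M)² - (V sin x)²` is a
quadratic polynomial in `u`. If `Q ≤ 1`, the value of `K` making its discriminant vanish is the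
supremum of `H(·, 0)`, and the double root `u = 1 - Q V` gives `cos x = -Q`. If `Q ≥ 1`, that root
lies at or below the least value `1 - V` of `u`, and the supremum is the value of `K` making the
larger root equal to `1 - V`, where `cos x = -1`.
-/

open Real Set

section Amplitude

variable {a b s : ℝ}

theorem abs_mul_cos_add_mul_sin_le (h : a ^ 2 + b ^ 2 ≤ s ^ 2) (α : ℝ) :
    |a * cos α + b * sin α| ≤ |s| := by
  refine sq_le_sq.mp (le_trans ?_ h)
  have hcauchy : (a * cos α + b * sin α) ^ 2 + (a * sin α - b * cos α) ^ 2 = a ^ 2 + b ^ 2 := by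
    linear_combination (a ^ 2 + b ^ 2) * sin_sq_add_cos_sq α
  linarith [sq_nonneg (a * sin α - b * cos α)]

theorem exists_mul_cos_add_mul_sin_eq (h : a ^ 2 + b ^ 2 = s ^ 2) :
    ∃ α, a * cos α + b * sin α = s := by
  obtain ⟨r, θ, rfl, rfl⟩ : ∃ r θ, r * cos θ = a ∧ r * sin θ = b :=
    ⟨_, _, Complex.norm_mul_cos_arg ⟨a, b⟩, Complex.norm_mul_sin_arg ⟨a, b⟩⟩
  have hr : s ^ 2 = r ^ 2 := by
    rw [← h]
    linear_combination r ^ 2 * sin_sq_add_cos_sq θ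
  rcases sq_eq_sq_iff_eq_or_eq_neg.mp hr with rfl | rfl
  · exact ⟨θ, by linear_combination s * sin_sq_add_cos_sq θ⟩
  · refine ⟨θ + π, ?_⟩
    rw [cos_add_pi, sin_add_pi]
    linear_combination -r * sin_sq_add_cos_sq θ

end Amplitude

theorem abs_mul_cos_le (r x : ℝ) : |r * cos x| ≤ |r| := by
  rw [abs_mul]
  exact mul_le_of_le_one_right (abs_nonneg r) (abs_cos_le_one x)

theorem one_add_mul_cos_pos {r : ℝ} (hr : |r| < 1) (x : ℝ) : 0 < 1 + r * cos x := by
  linarith [neg_le_of_abs_le (abs_mul_cos_le r x)]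

theorem one_sub_mul_cos_pos {r : ℝ} (hr : |r| < 1) (x : ℝ) : 0 < 1 - r * cos x := by
  linarith [le_of_abs_le (abs_mul_cos_le r x)]

section Maximum

variable {V W x M α : ℝ}

theorem fVW_le_iff (hW : |W| < 1) :
    fVW V W α x ≤ M ↔ (V * cos x + W * M) * cos α + -(V * sin x) * sin α ≤ M - 1 := by
  rw [fVW, div_le_iff₀ (one_sub_mul_cos_pos hW α), cos_add]
  constructor <;> intro h <;> linarith

theorem le_fVW_iff (hW : |W| < 1) :
    M ≤ fVW V W α x ↔ M - 1 ≤ (V * cos x + W * M) * cos α + -(V * sin x) * sin α := by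
  rw [fVW, le_div_iff₀ (one_sub_mul_cos_pos hW α), cos_add]
  constructor <;> intro h <;> linarith

theorem fVW_zero_left : fVW V W 0 x = (1 + V * cos x) / (1 - W) := by
  simp [fVW]

/- The radius bound gives `f ≤ M` for all `α` if `1 ≤ M`, and `M ≤ f` for all `α` otherwise; the
value at `α₀` excludes the second alternative. -/
theorem fVW_le_of_lt {α₀ : ℝ} (hW : |W| < 1)
    (hM : (V * cos x + W * M) ^ 2 + (V * sin x) ^ 2 ≤ (M - 1) ^ 2)
    (hα₀ : fVW V W α₀ x < M) (α : ℝ) : fVW V W α x ≤ M := by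
  have habs := abs_mul_cos_add_mul_sin_le ((neg_sq (V * sin x)).symm ▸ hM)
  rcases le_total 1 M with h1 | h1
  · rw [abs_of_nonneg (sub_nonneg.mpr h1)] at habs
    exact (fVW_le_iff hW).mpr (le_of_abs_le (habs α))
  · rw [abs_of_nonpos (sub_nonpos.mpr h1)] at habs
    have hge : M ≤ fVW V W α₀ x := (le_fVW_iff hW).mpr (neg_le_neg_iff.mp (abs_le'.mp (habs α₀)).2)
    exact absurd hα₀ hge.not_gt

theorem exists_fVW_eq (hW : |W| < 1)
    (hM : (V * cos x + W * M) ^ 2 + (V * sin x) ^ 2 = (M - 1) ^ 2) :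
    ∃ α, fVW V W α x = M := by
  obtain ⟨α, hα⟩ := exists_mul_cos_add_mul_sin_eq ((neg_sq (V * sin x)).symm ▸ hM)
  exact ⟨α, ((fVW_le_iff hW).mpr hα.le).antisymm ((le_fVW_iff hW).mpr hα.ge)⟩

theorem bddAbove_range_fVW (hW : |W| < 1) : BddAbove (range fun α => fVW V W α x) := by
  refine ⟨(1 + |V|) / (1 - |W|), forall_mem_range.mpr fun α => ?_⟩
  have hnum : V * cos (x + α) ≤ |V| := le_of_abs_le (abs_mul_cos_le V _)
  have hden : W * cos α ≤ |W| := le_of_abs_le (abs_mul_cos_le W α)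
  exact div_le_div₀ (by positivity) (by linarith) (by linarith) (by linarith)

theorem fVW_le_fVWmax (hW : |W| < 1) (α : ℝ) : fVW V W α x ≤ fVWmax V W x :=
  le_ciSup (f := fun α => fVW V W α x) (bddAbove_range_fVW hW) α

end Maximum

section Ratio

variable {V W K Q x x₀ u : ℝ}

theorem Hfun_zero_right_le_iff (hV : |V| < 1) :
    Hfun V W x 0 ≤ K ↔ fVWmax V W x ≤ K * (1 + V * cos x) := by
  rw [Hfun, add_zero, div_le_iff₀ (one_add_mul_cos_pos hV x)]

theorem le_Hfun_zero_right_iff (hV : |V| < 1) :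
    K ≤ Hfun V W x 0 ↔ K * (1 + V * cos x) ≤ fVWmax V W x := by
  rw [Hfun, add_zero, le_div_iff₀ (one_add_mul_cos_pos hV x)]

theorem one_div_le_Hfun_zero_right (hV : |V| < 1) (hW : |W| < 1) :
    1 / (1 - W) ≤ Hfun V W x 0 := by
  rw [le_Hfun_zero_right_iff hV, one_div_mul_eq_div, ← fVW_zero_left]
  exact fVW_le_fVWmax hW 0

theorem Hfun_zero_right_eq_of_sin_eq_zero (hV : |V| < 1) (hW : |W| < 1) (hsin : sin x = 0)
    (hVW : 0 ≤ W + V * cos x) : Hfun V W x 0 = 1 / (1 - W) := by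
  refine le_antisymm ?_ (one_div_le_Hfun_zero_right hV hW)
  rw [Hfun_zero_right_le_iff hV, one_div_mul_eq_div]
  refine ciSup_le fun α => ?_
  rw [fVW, cos_add, hsin,
    div_le_div_iff₀ (one_sub_mul_cos_pos hW α) (by linarith [lt_of_abs_lt hW])]
  linarith [mul_nonneg hVW (sub_nonneg.mpr (cos_le_one α))]

/-- The gap `(M - 1)² - (V cos x + W M)² - (V sin x)²` at `M = K u`, as a polynomial in
`u = 1 + V cos x`. It decides whether `K` bounds `H(x, 0)` and whether `K` is attained. -/
def gapQuadratic (V W K u : ℝ) : ℝ :=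
  (K ^ 2 * (1 - W ^ 2) - 2 * K * W) * u ^ 2 - 2 * K * (1 - W) * u + (1 - V ^ 2)

theorem gapQuadratic_one_add_mul_cos :
    gapQuadratic V W K (1 + V * cos x) = (K * (1 + V * cos x) - 1) ^ 2 -
      ((V * cos x + W * (K * (1 + V * cos x))) ^ 2 + (V * sin x) ^ 2) := by
  rw [gapQuadratic]
  linear_combination V ^ 2 * sin_sq_add_cos_sq x

theorem Hfun_zero_right_le_of_gapQuadratic_nonneg (hV : |V| < 1) (hW : |W| < 1)
    (hK : 1 / (1 - W) < K) (hgap : 0 ≤ gapQuadratic V W K (1 + V * cos x)) :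
    Hfun V W x 0 ≤ K := by
  rw [gapQuadratic_one_add_mul_cos, sub_nonneg] at hgap
  have hzero : fVW V W 0 x < K * (1 + V * cos x) := by
    rw [fVW_zero_left, ← one_div_mul_eq_div]
    exact mul_lt_mul_of_pos_right hK (one_add_mul_cos_pos hV x)
  exact (Hfun_zero_right_le_iff hV).mpr (ciSup_le (fVW_le_of_lt hW hgap hzero))

theorem le_Hfun_zero_right_of_gapQuadratic_eq_zero (hV : |V| < 1) (hW : |W| < 1)
    (hgap : gapQuadratic V W K (1 + V * cos x) = 0) : K ≤ Hfun V W x 0 := by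
  rw [gapQuadratic_one_add_mul_cos, sub_eq_zero] at hgap
  obtain ⟨α, hα⟩ := exists_fVW_eq hW hgap.symm
  exact (le_Hfun_zero_right_iff hV).mpr (hα ▸ fVW_le_fVWmax hW α)

theorem Hfun_zero_right_eq_and_iSup_eq_of_gapQuadratic (hV : |V| < 1) (hW : |W| < 1)
    (hK : 1 / (1 - W) < K) (hgap : ∀ x, 0 ≤ gapQuadratic V W K (1 + V * cos x))
    (hgap₀ : gapQuadratic V W K (1 + V * cos x₀) = 0) :
    Hfun V W x₀ 0 = K ∧ ⨆ x, Hfun V W x 0 = K := by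
  have hle (x : ℝ) : Hfun V W x 0 ≤ K :=
    Hfun_zero_right_le_of_gapQuadratic_nonneg hV hW hK (hgap x)
  have heq : Hfun V W x₀ 0 = K :=
    (hle x₀).antisymm (le_Hfun_zero_right_of_gapQuadratic_eq_zero hV hW hgap₀)
  exact ⟨heq, IsGreatest.csSup_eq ⟨⟨x₀, heq⟩, forall_mem_range.mpr hle⟩⟩

theorem gapQuadratic_eq_mul_sq {r : ℝ} (hr : 2 * W * (1 - r) = V ^ 2 * (1 + W)) (hr0 : r ≠ 0)
    (hW : 1 - W ≠ 0) :
    gapQuadratic V W (1 / (1 - W) * ((1 - V ^ 2) / r)) u = (1 - V ^ 2) * (1 - u / r) ^ 2 := by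
  rw [gapQuadratic]
  field_simp
  linear_combination u ^ 2 * (1 - V ^ 2) * (1 - W) * hr

theorem gapQuadratic_eq_sub_mul (hV : 1 - V ≠ 0) (hW : 1 + W ≠ 0) :
    gapQuadratic V W (1 / (1 + W) * ((1 + V) / (1 - V))) u =
      (1 + V) * (u - (1 - V)) *
        ((1 + W) * (1 - V) * (u - (1 - V)) + 2 * (V * (1 + W) - 2 * W) * u) /
          ((1 + W) * (1 - V) ^ 2) := by
  rw [gapQuadratic]
  field_simp
  ring

theorem Hfun_zero_right_eq_and_iSup_eq_of_le_one (hV : V ∈ Ioo 0 1) (hW : W ∈ Ioo 0 1)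
    (hQ : 2 * W * Q = V * (1 + W)) (hQ1 : Q ≤ 1) (hx₀ : cos x₀ = -Q) :
    Hfun V W x₀ 0 = 1 / (1 - W) * ((1 - V ^ 2) / (1 - Q * V)) ∧
      ⨆ x, Hfun V W x 0 = 1 / (1 - W) * ((1 - V ^ 2) / (1 - Q * V)) := by
  obtain ⟨hV0, hV1⟩ := hV
  obtain ⟨hW0, hW1⟩ := hW
  have hW' : 0 < 1 - W := sub_pos.mpr hW1
  have hVQ : V < Q := by
    refine lt_of_mul_lt_mul_left ?_ (by positivity : 0 ≤ 2 * W)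
    rw [hQ, mul_comm]
    exact mul_lt_mul_of_pos_left (by linarith) hV0
  have hQV : 0 < 1 - Q * V := sub_pos.mpr (mul_lt_one_of_nonneg_of_lt_one_right hQ1 hV0.le hV1)
  have hVV : V ^ 2 < Q * V := by
    rw [sq]
    exact mul_lt_mul_of_pos_right hVQ hV0
  have hr : 2 * W * (1 - (1 - Q * V)) = V ^ 2 * (1 + W) := by linear_combination V * hQ
  have hK : 1 / (1 - W) < 1 / (1 - W) * ((1 - V ^ 2) / (1 - Q * V)) :=
    lt_mul_of_one_lt_right (one_div_pos.mpr hW') ((one_lt_div hQV).mpr (by linarith))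
  refine Hfun_zero_right_eq_and_iSup_eq_of_gapQuadratic
    (abs_lt.mpr ⟨by linarith, hV1⟩) (abs_lt.mpr ⟨by linarith, hW1⟩) hK (fun x => ?_) ?_
  · rw [gapQuadratic_eq_mul_sq hr hQV.ne' hW'.ne']
    exact mul_nonneg (by linarith) (sq_nonneg _)
  · rw [gapQuadratic_eq_mul_sq hr hQV.ne' hW'.ne', hx₀,
      show 1 + V * -Q = 1 - Q * V by ring, div_self hQV.ne']
    ring

theorem Hfun_zero_right_eq_and_iSup_eq_of_two_mul_le (hV : V ∈ Ioo 0 1) (hW : W ∈ Ioo 0 1)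
    (hVW : 2 * W ≤ V * (1 + W)) (hx₀ : cos x₀ = -1) :
    Hfun V W x₀ 0 = 1 / (1 + W) * ((1 + V) / (1 - V)) ∧
      ⨆ x, Hfun V W x 0 = 1 / (1 + W) * ((1 + V) / (1 - V)) := by
  obtain ⟨hV0, hV1⟩ := hV
  obtain ⟨hW0, hW1⟩ := hW
  have hVabs : |V| < 1 := abs_lt.mpr ⟨by linarith, hV1⟩
  have hV' : 0 < 1 - V := sub_pos.mpr hV1
  have hW' : 0 < 1 + W := by linarith
  have hWV : W < V := by linarith [mul_lt_of_lt_one_left hW0 hV1]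
  have hK : 1 / (1 - W) < 1 / (1 + W) * ((1 + V) / (1 - V)) := by
    rw [div_mul_div_comm, one_mul, div_lt_div_iff₀ (by linarith) (by positivity)]
    linarith
  refine Hfun_zero_right_eq_and_iSup_eq_of_gapQuadratic
    hVabs (abs_lt.mpr ⟨by linarith, hW1⟩) hK (fun x => ?_) ?_
  · have : 0 ≤ 1 + V * cos x - (1 - V) := by
      linarith [mul_nonneg hV0.le (neg_le_iff_add_nonneg.mp (neg_one_le_cos x))]
    have : 0 < 1 + V * cos x := one_add_mul_cos_pos hVabs x
    have : 0 ≤ V * (1 + W) - 2 * W := sub_nonneg.mpr hVW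
    rw [gapQuadratic_eq_sub_mul hV'.ne' hW'.ne']
    positivity
  · rw [gapQuadratic_eq_sub_mul hV'.ne' hW'.ne', hx₀]
    ring

end Ratio

/-- For `V₁, W₁ ∈ (0,1)` and `Q₁ = V₁(1+W₁)/(2W₁)`:
`sup_x H(x,0) = (1/(1−W₁))·(1−V₁²)/(1−Q₁V₁)` if `Q₁ ≤ 1`, attained at some `x₀`
with `cos x₀ = −Q₁`; `sup_x H(x,0) = (1/(1+W₁))·(1+V₁)/(1−V₁)` if `Q₁ ≥ 1`,
attained at `x₀` an odd multiple of `π`.  Moreover `inf_x H(x,0) = 1/(1−W₁)`,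
attained at every multiple of `π` if `V₁ ≤ W₁` and at every even multiple of `π`
if `V₁ > W₁`. -/
theorem Hfun_zero_sup_inf (V₁ W₁ : ℝ)
    (hV : V₁ ∈ Set.Ioo (0 : ℝ) 1) (hW : W₁ ∈ Set.Ioo (0 : ℝ) 1) :
    let Q₁ : ℝ := V₁ * (1 + W₁) / (2 * W₁)
    (Q₁ ≤ 1 →
      (⨆ x : ℝ, Hfun V₁ W₁ x 0) = (1 / (1 - W₁)) * ((1 - V₁ ^ 2) / (1 - Q₁ * V₁)) ∧
      ∃ x₀ : ℝ, Real.cos x₀ = -Q₁ ∧ Hfun V₁ W₁ x₀ 0 = (⨆ x : ℝ, Hfun V₁ W₁ x 0)) ∧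
    (Q₁ ≥ 1 →
      (⨆ x : ℝ, Hfun V₁ W₁ x 0) = (1 / (1 + W₁)) * ((1 + V₁) / (1 - V₁)) ∧
      ∃ x₀ : ℝ, (∃ k : ℤ, x₀ = (2 * k + 1) * Real.pi) ∧
        Hfun V₁ W₁ x₀ 0 = (⨆ x : ℝ, Hfun V₁ W₁ x 0)) ∧
    (⨅ x : ℝ, Hfun V₁ W₁ x 0) = 1 / (1 - W₁) ∧
    (V₁ ≤ W₁ → ∀ x : ℝ, (∃ k : ℤ, x = k * Real.pi) →
      Hfun V₁ W₁ x 0 = 1 / (1 - W₁)) ∧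
    (V₁ > W₁ → ∀ x : ℝ, (∃ k : ℤ, x = 2 * k * Real.pi) →
      Hfun V₁ W₁ x 0 = 1 / (1 - W₁)) := by
  intro Q₁
  have hVabs : |V₁| < 1 := abs_lt.mpr ⟨by linarith [hV.1], hV.2⟩
  have hWabs : |W₁| < 1 := abs_lt.mpr ⟨by linarith [hW.1], hW.2⟩
  have hW2 : 0 < 2 * W₁ := by linarith [hW.1]
  have hQ : 2 * W₁ * Q₁ = V₁ * (1 + W₁) := mul_div_cancel₀ _ hW2.ne'
  have hQpos : 0 < Q₁ := div_pos (mul_pos hV.1 (by linarith)) hW2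
  have hinf_even (x : ℝ) (hx : ∃ k : ℤ, x = 2 * k * π) : Hfun V₁ W₁ x 0 = 1 / (1 - W₁) := by
    obtain ⟨k, rfl⟩ := hx
    have hcos : cos (2 * k * π) = 1 := by rw [mul_right_comm, mul_comm, cos_int_mul_two_pi]
    exact Hfun_zero_right_eq_of_sin_eq_zero hVabs hWabs (sin_eq_zero_iff_cos_eq.mpr (.inl hcos))
      (by rw [hcos]; linarith [hV.1])
  refine ⟨fun hQ1 => ?_, fun hQ1 => ?_, ?_, ?_, fun _ => hinf_even⟩
  · have hcos : cos (arccos (-Q₁)) = -Q₁ := cos_arccos (by linarith) (by linarith)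
    obtain ⟨heq, hsup⟩ := Hfun_zero_right_eq_and_iSup_eq_of_le_one hV hW hQ hQ1 hcos
    exact ⟨hsup, _, hcos, heq.trans hsup.symm⟩
  · have hVW : 2 * W₁ ≤ V₁ * (1 + W₁) := (one_le_div hW2).mp hQ1
    obtain ⟨heq, hsup⟩ := Hfun_zero_right_eq_and_iSup_eq_of_two_mul_le hV hW hVW cos_pi
    exact ⟨hsup, π, ⟨0, by simp⟩, heq.trans hsup.symm⟩
  · exact IsLeast.csInf_eq ⟨⟨0, hinf_even 0 ⟨0, by simp⟩⟩,
      forall_mem_range.mpr fun _ => one_div_le_Hfun_zero_right hVabs hWabs⟩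
  · rintro hVW _ ⟨k, rfl⟩
    refine Hfun_zero_right_eq_of_sin_eq_zero hVabs hWabs (sin_int_mul_pi k) ?_
    linarith [mul_nonneg hV.1.le (neg_le_iff_add_nonneg.mp (neg_one_le_cos (k * π)))]
end

section
/- Let V₁, W₁ ∈ (0,1) and Q₁ = V₁(1+W₁)/(2W₁). Then: (i) if x is an even multiple of π, then H(x, 0) = 1/(1−W₁); (ii) if x is an odd multiple of π, then H(x, 0) = 1/(1−W₁) when V₁ ≤ W₁ and H(x, 0) = (1/(1+W₁))·(1+V₁)/(1−V₁) when V₁ ≥ W₁; (iii) if Q₁ ≤ 1 and cos x = −Q₁, then H(x, 0) = (1/(1−W₁))·(1−V₁²)/(1−Q₁V₁). -/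
/-!
For positive `g`, the maximum of `f / g` is the number `M` for which `f - M * g` has maximum `0`.
Here `f - M * g` is a trigonometric polynomial of degree one in `α`, with maximum
`√((V cos x + M W)² + (V sin x)²) - (M - 1)`. Hence `f^max_{VW}(x)` is the root `M ≥ 1` of the
quadratic equation `V² + 2 V W M cos x + (M W)² = (M - 1)²`, which factors over the rationals in
`V` and `W` for each of the values of `cos x` considered.
-/

theorem isGreatest_range_iff {ι α : Type*} [Preorder α] {f : ι → α} {M : α} :
    IsGreatest (Set.range f) M ↔ (∃ i, f i = M) ∧ ∀ i, f i ≤ M :=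
  and_congr Set.mem_range Set.forall_mem_range

theorem isGreatest_range_div_iff {ι 𝕜 : Type*} [Field 𝕜] [LinearOrder 𝕜] [IsStrictOrderedRing 𝕜]
    {f g : ι → 𝕜} (hg : ∀ i, 0 < g i) {M : 𝕜} :
    IsGreatest (Set.range fun i ↦ f i / g i) M ↔
      IsGreatest (Set.range fun i ↦ f i - M * g i) 0 := by
  simp only [isGreatest_range_iff, div_eq_iff (hg _).ne', div_le_iff₀ (hg _), sub_eq_zero,
    sub_nonpos]

theorem mul_cos_add_mul_sin_eq_norm_mul_cos_sub_arg (z : ℂ) (α : ℝ) :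
    z.re * Real.cos α + z.im * Real.sin α = ‖z‖ * Real.cos (α - z.arg) := by
  rw [Real.cos_sub]
  linear_combination
    -Real.cos α * Complex.norm_mul_cos_arg z - Real.sin α * Complex.norm_mul_sin_arg z

theorem isGreatest_range_mul_cos_add_mul_sin (a b : ℝ) :
    IsGreatest (Set.range fun α ↦ a * Real.cos α + b * Real.sin α) (√(a ^ 2 + b ^ 2)) := by
  have phase (α : ℝ) := mul_cos_add_mul_sin_eq_norm_mul_cos_sub_arg ⟨a, b⟩ α
  simp only [Complex.norm_eq_sqrt_sq_add_sq] at phase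
  simp only [phase, isGreatest_range_iff]
  exact ⟨⟨Complex.arg ⟨a, b⟩, by simp⟩,
    fun _ ↦ mul_le_of_le_one_right (Real.sqrt_nonneg _) (Real.cos_le_one _)⟩

theorem cos_two_mul_int_mul_pi (k : ℤ) : Real.cos (2 * k * Real.pi) = 1 := by
  rw [mul_comm 2, mul_assoc, Real.cos_int_mul_two_pi]

theorem cos_two_mul_int_add_one_mul_pi (k : ℤ) : Real.cos ((2 * k + 1) * Real.pi) = -1 := by
  rw [add_one_mul, mul_comm 2, mul_assoc, Real.cos_int_mul_two_pi_add_pi]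

section Maximum

variable {V W x M : ℝ}

theorem one_sub_mul_cos_pos_s10 (hW : |W| < 1) (α : ℝ) : 0 < 1 - W * Real.cos α := by
  have : |W * Real.cos α| < 1 := by
    rw [abs_mul]
    exact (mul_le_of_le_one_right (abs_nonneg W) (Real.abs_cos_le_one α)).trans_lt hW
  linarith [le_abs_self (W * Real.cos α)]

theorem isGreatest_range_fVW (hW : |W| < 1) (hM : 1 ≤ M)
    (h : V ^ 2 + 2 * V * W * M * Real.cos x + (M * W) ^ 2 = (M - 1) ^ 2) :
    IsGreatest (Set.range fun α ↦ fVW V W α x) M := by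
  have amplitude :
      √((V * Real.cos x + M * W) ^ 2 + (-(V * Real.sin x)) ^ 2) = M - 1 := by
    rw [Real.sqrt_eq_iff_eq_sq (by positivity) (by linarith)]
    linear_combination h + V ^ 2 * Real.sin_sq_add_cos_sq x
  have hmax := isGreatest_range_mul_cos_add_mul_sin (V * Real.cos x + M * W) (-(V * Real.sin x))
  rw [amplitude] at hmax
  refine (isGreatest_range_div_iff (one_sub_mul_cos_pos_s10 hW)).2 ?_
  have expand (α : ℝ) : 1 + V * Real.cos (x + α) - M * (1 - W * Real.cos α) =
      (V * Real.cos x + M * W) * Real.cos α + -(V * Real.sin x) * Real.sin α - (M - 1) := by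
    rw [Real.cos_add]
    ring
  simpa only [expand, isGreatest_range_iff, sub_eq_zero, sub_nonpos] using hmax

theorem fVWmax_eq_of_quadratic (hW : |W| < 1) (hM : 1 ≤ M)
    (h : V ^ 2 + 2 * V * W * M * Real.cos x + (M * W) ^ 2 = (M - 1) ^ 2) :
    fVWmax V W x = M :=
  (isGreatest_range_fVW hW hM h).csSup_eq

theorem fVWmax_of_cos_eq_one (hW : |W| < 1) (hVW : -W ≤ V) (hx : Real.cos x = 1) :
    fVWmax V W x = (1 + V) / (1 - W) := by
  have hW' : 0 < 1 - W := by linarith [le_abs_self W]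
  refine fVWmax_eq_of_quadratic hW ((one_le_div hW').2 (by linarith)) ?_
  rw [hx]
  field_simp
  ring

theorem fVWmax_of_cos_eq_neg_one_of_le (hW : |W| < 1) (hVW : V ≤ W) (hx : Real.cos x = -1) :
    fVWmax V W x = (1 - V) / (1 - W) := by
  have hW' : 0 < 1 - W := by linarith [le_abs_self W]
  refine fVWmax_eq_of_quadratic hW ((one_le_div hW').2 (by linarith)) ?_
  rw [hx]
  field_simp
  ring

theorem fVWmax_of_cos_eq_neg_one_of_ge (hW : |W| < 1) (hVW : W ≤ V) (hx : Real.cos x = -1) :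
    fVWmax V W x = (1 + V) / (1 + W) := by
  have hW' : 0 < 1 + W := by linarith [neg_abs_le W]
  refine fVWmax_eq_of_quadratic hW ((one_le_div hW').2 (by linarith)) ?_
  rw [hx]
  field_simp
  ring

theorem sq_le_of_two_mul_cos_eq (hW : 0 ≤ W) (hx : 2 * W * Real.cos x = -(V * (1 + W))) :
    V ^ 2 ≤ W := by
  refine le_of_mul_le_mul_right ?_ (by positivity : 0 < (1 + W) ^ 2)
  calc V ^ 2 * (1 + W) ^ 2 = 4 * W ^ 2 * Real.cos x ^ 2 := by
        linear_combination (V * (1 + W) - 2 * W * Real.cos x) * hx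
    _ ≤ 4 * W ^ 2 := mul_le_of_le_one_right (by positivity) (Real.cos_sq_le_one x)
    _ = W * (4 * 1 * W) := by ring
    _ ≤ W * (1 + W) ^ 2 := mul_le_mul_of_nonneg_left (four_mul_le_sq_add 1 W) hW

theorem fVWmax_of_two_mul_cos_eq (hW : W ∈ Set.Ico (0 : ℝ) 1)
    (hx : 2 * W * Real.cos x = -(V * (1 + W))) :
    fVWmax V W x = (1 - V ^ 2) / (1 - W) := by
  have hW' : 0 < 1 - W := sub_pos.2 hW.2
  have hVW : V ^ 2 ≤ W := sq_le_of_two_mul_cos_eq hW.1 hx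
  refine fVWmax_eq_of_quadratic (abs_lt.2 ⟨by linarith [hW.1], hW.2⟩)
    ((one_le_div hW').2 (by linarith)) ?_
  field_simp
  linear_combination V * (1 - V ^ 2) * (1 - W) * hx

end Maximum

theorem Hfun_zero_values_general (V₁ W₁ : ℝ)
    (hVW : -W₁ ≤ V₁) (hV : V₁ ≠ 1) (hW : W₁ ∈ Set.Ioo (0 : ℝ) 1) :
    let Q₁ : ℝ := V₁ * (1 + W₁) / (2 * W₁)
    (∀ x : ℝ, (∃ k : ℤ, x = 2 * k * Real.pi) → Hfun V₁ W₁ x 0 = 1 / (1 - W₁)) ∧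
    (∀ x : ℝ, (∃ k : ℤ, x = (2 * k + 1) * Real.pi) →
      (V₁ ≤ W₁ → Hfun V₁ W₁ x 0 = 1 / (1 - W₁)) ∧
      (V₁ ≥ W₁ → Hfun V₁ W₁ x 0 = (1 / (1 + W₁)) * ((1 + V₁) / (1 - V₁)))) ∧
    (∀ x : ℝ, Real.cos x = -Q₁ →
      Hfun V₁ W₁ x 0 = (1 / (1 - W₁)) * ((1 - V₁ ^ 2) / (1 - Q₁ * V₁))) := by
  intro Q₁
  obtain ⟨hW0, hW1⟩ := hW
  have hW_abs : |W₁| < 1 := abs_lt.2 ⟨by linarith, hW1⟩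
  have hV_add : 1 + V₁ ≠ 0 := by linarith
  have hV_sub : 1 - V₁ ≠ 0 := sub_ne_zero.2 hV.symm
  simp only [Hfun, add_zero]
  refine ⟨?_, ?_, ?_⟩
  · rintro x ⟨k, rfl⟩
    have hx := cos_two_mul_int_mul_pi k
    rw [fVWmax_of_cos_eq_one hW_abs hVW hx, hx, mul_one, div_right_comm, div_self hV_add]
  · rintro x ⟨k, rfl⟩
    have hx := cos_two_mul_int_add_one_mul_pi k
    refine ⟨fun hle ↦ ?_, fun hge ↦ ?_⟩
    · rw [fVWmax_of_cos_eq_neg_one_of_le hW_abs hle hx, hx, mul_neg_one, ← sub_eq_add_neg,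
        div_right_comm, div_self hV_sub]
    · rw [fVWmax_of_cos_eq_neg_one_of_ge hW_abs hge hx, hx]
      ring
  · intro x hx
    have hcos : 2 * W₁ * Real.cos x = -(V₁ * (1 + W₁)) := by
      rw [hx]
      simp only [Q₁]
      field_simp
    rw [fVWmax_of_two_mul_cos_eq ⟨hW0.le, hW1⟩ hcos, hx]
    ring

/-- Let `V₁, W₁ ∈ (0,1)` and `Q₁ = V₁(1+W₁)/(2W₁)`.
(i) if `x` is an even multiple of `π`, then `H(x,0) = 1/(1−W₁)`;
(ii) if `x` is an odd multiple of `π`, then `H(x,0) = 1/(1−W₁)` when `V₁ ≤ W₁`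
and `H(x,0) = (1/(1+W₁))·(1+V₁)/(1−V₁)` when `V₁ ≥ W₁`;
(iii) if `Q₁ ≤ 1` and `cos x = −Q₁`, then
`H(x,0) = (1/(1−W₁))·(1−V₁²)/(1−Q₁V₁)`. -/
theorem Hfun_zero_values (V₁ W₁ : ℝ)
    (hV : V₁ ∈ Set.Ioo (0 : ℝ) 1) (hW : W₁ ∈ Set.Ioo (0 : ℝ) 1) :
    let Q₁ : ℝ := V₁ * (1 + W₁) / (2 * W₁)
    (∀ x : ℝ, (∃ k : ℤ, x = 2 * k * Real.pi) → Hfun V₁ W₁ x 0 = 1 / (1 - W₁)) ∧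
    (∀ x : ℝ, (∃ k : ℤ, x = (2 * k + 1) * Real.pi) →
      (V₁ ≤ W₁ → Hfun V₁ W₁ x 0 = 1 / (1 - W₁)) ∧
      (V₁ ≥ W₁ → Hfun V₁ W₁ x 0 = (1 / (1 + W₁)) * ((1 + V₁) / (1 - V₁)))) ∧
    (Q₁ ≤ 1 → ∀ x : ℝ, Real.cos x = -Q₁ →
      Hfun V₁ W₁ x 0 = (1 / (1 - W₁)) * ((1 - V₁ ^ 2) / (1 - Q₁ * V₁))) :=
  have h := Hfun_zero_values_general V₁ W₁ (by linarith [hV.1, hW.1]) hV.2.ne hW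
  ⟨h.1, h.2.1, fun _ ↦ h.2.2⟩
end
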